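/- Let (x, K) be the solution of the backward Skorokhod problem BSP_l^r(s, a) on [0,T]: x_t = a + s_T − s_t + K_T − K_t, l(t, x_t) ≤ 0 ≤ r(t, x_t), K = K^r − K^l with K^r, K^l nondecreasing continuous starting at 0 and the flat-off conditions. Define the time-reversed data s̄_t = a + s_T − s_{T−t}, l̄(t,x) = l(T−t, x), r̄(t,x) = r(T−t, x), and the reversed processes x̄_t = x_{T−t}, K̄_t satisfying K_t = K̄_T − K̄_{T−t}. Then (x̄, K̄) is the unique solution of the forward Skorokhod problem SP_{l̄}^{r̄}(s̄). -/

import Mathlib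

open Set

/-- A solution `(x, K)` (with Jordan decomposition `K = Kr - Kl`) of the Skorokhod
problem `SP_l^r(s)` on `[0, T]` with two nonlinear time-dependent reflecting
constraints.  The flat-off conditions `∫ 1_{l(s,x_s)<0} dKl = ∫ 1_{r(s,x_s)>0} dKr = 0`
are expressed by requiring `Kl` (resp. `Kr`) to be constant on every subinterval where
the lower (resp. upper) constraint is strictly inactive. -/
structure SkorokhodSolution (T : ℝ) (l r : ℝ → ℝ → ℝ) (s : ℝ → ℝ)
    (x K Kr Kl : ℝ → ℝ) : Prop where
  cont_x : ContinuousOn x (Icc 0 T)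
  eqn : ∀ t ∈ Icc (0 : ℝ) T, x t = s t + K t
  lower : ∀ t ∈ Icc (0 : ℝ) T, l t (x t) ≤ 0
  upper : ∀ t ∈ Icc (0 : ℝ) T, 0 ≤ r t (x t)
  decomp : ∀ t ∈ Icc (0 : ℝ) T, K t = Kr t - Kl t
  Kr_zero : Kr 0 = 0
  Kl_zero : Kl 0 = 0
  cont_Kr : ContinuousOn Kr (Icc 0 T)
  cont_Kl : ContinuousOn Kl (Icc 0 T)
  mono_Kr : MonotoneOn Kr (Icc 0 T)
  mono_Kl : MonotoneOn Kl (Icc 0 T)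
  flat_l : ∀ a b : ℝ, 0 ≤ a → a ≤ b → b ≤ T →
    (∀ u ∈ Icc a b, l u (x u) < 0) → Kl b = Kl a
  flat_r : ∀ a b : ℝ, 0 ≤ a → a ≤ b → b ≤ T →
    (∀ u ∈ Icc a b, 0 < r u (x u)) → Kr b = Kr a

/-- Standing assumptions on the reflecting boundary functions `l ≤ r`:
continuity in `t`, strict monotonicity and bi-Lipschitz continuity in `x` with
constants `0 < c < C`, and uniform separation `inf (r - l) > 0`. -/
def LRAssumptions (T c C : ℝ) (l r : ℝ → ℝ → ℝ) : Prop :=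
  (∀ x : ℝ, ContinuousOn (fun t => l t x) (Icc 0 T)) ∧
  (∀ x : ℝ, ContinuousOn (fun t => r t x) (Icc 0 T)) ∧
  (∀ t ∈ Icc (0 : ℝ) T, StrictMono (l t)) ∧
  (∀ t ∈ Icc (0 : ℝ) T, StrictMono (r t)) ∧
  (∀ t ∈ Icc (0 : ℝ) T, ∀ x y : ℝ,
    c * |x - y| ≤ |l t x - l t y| ∧ |l t x - l t y| ≤ C * |x - y|) ∧
  (∀ t ∈ Icc (0 : ℝ) T, ∀ x y : ℝ,
    c * |x - y| ≤ |r t x - r t y| ∧ |r t x - r t y| ≤ C * |x - y|) ∧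
  (∃ ε : ℝ, 0 < ε ∧ ∀ t ∈ Icc (0 : ℝ) T, ∀ x : ℝ, ε ≤ r t x - l t x)

/-- A solution `(x, K)` (with `K = Kr - Kl`) of the backward Skorokhod problem
`BSP_l^r(s, a)` on `[0, T]`. -/
structure BackwardSkorokhodSolution (T : ℝ) (l r : ℝ → ℝ → ℝ) (s : ℝ → ℝ) (a : ℝ)
    (x K Kr Kl : ℝ → ℝ) : Prop where
  cont_x : ContinuousOn x (Icc 0 T)
  eqn : ∀ t ∈ Icc (0 : ℝ) T, x t = a + s T - s t + (K T - K t)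
  lower : ∀ t ∈ Icc (0 : ℝ) T, l t (x t) ≤ 0
  upper : ∀ t ∈ Icc (0 : ℝ) T, 0 ≤ r t (x t)
  decomp : ∀ t ∈ Icc (0 : ℝ) T, K t = Kr t - Kl t
  Kr_zero : Kr 0 = 0
  Kl_zero : Kl 0 = 0
  cont_Kr : ContinuousOn Kr (Icc 0 T)
  cont_Kl : ContinuousOn Kl (Icc 0 T)
  mono_Kr : MonotoneOn Kr (Icc 0 T)
  mono_Kl : MonotoneOn Kl (Icc 0 T)
  flat_l : ∀ a' b : ℝ, 0 ≤ a' → a' ≤ b → b ≤ T →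
    (∀ u ∈ Icc a' b, l u (x u) < 0) → Kl b = Kl a'
  flat_r : ∀ a' b : ℝ, 0 ≤ a' → a' ≤ b → b ≤ T →
    (∀ u ∈ Icc a' b, 0 < r u (x u)) → Kr b = Kr a'



theorem skorokhod_le {T : ℝ} {l r : ℝ → ℝ → ℝ} {s : ℝ → ℝ}
    (hl : ∀ t ∈ Icc (0 : ℝ) T, StrictMono (l t))
    (hr : ∀ t ∈ Icc (0 : ℝ) T, StrictMono (r t))
    {x K Kr Kl x' K' Kr' Kl' : ℝ → ℝ}
    (h : SkorokhodSolution T l r s x K Kr Kl)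
    (h' : SkorokhodSolution T l r s x' K' Kr' Kl') :
    ∀ t ∈ Icc (0 : ℝ) T, x' t ≤ x t := by
  intro t ht
  by_contra! hlt
  have hsub : Icc (0 : ℝ) t ⊆ Icc 0 T := Icc_subset_Icc_right ht.2
  have hx := h.cont_x.mono hsub
  have hx' := h'.cont_x.mono hsub
  have hd : ContinuousOn (fun u => x' u - x u) (Icc 0 t) := hx'.sub hx
  have hclosed : IsClosed (Icc 0 t ∩ (fun u => x' u - x u) ⁻¹' Iic 0) :=
    hd.preimage_isClosed_of_isClosed isClosed_Icc isClosed_Iic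
  have hcomp : IsCompact (Icc 0 t ∩ (fun u => x' u - x u) ⁻¹' Iic 0) :=
    isCompact_Icc.of_isClosed_subset hclosed inter_subset_left
  have h0 : (0 : ℝ) ∈ Icc (0 : ℝ) T := ⟨le_rfl, ht.1.trans ht.2⟩
  have hne : (Icc 0 t ∩ (fun u => x' u - x u) ⁻¹' Iic 0).Nonempty := by
    refine ⟨0, ⟨le_rfl, ht.1⟩, ?_⟩
    have e1 := h.eqn 0 h0
    have e2 := h'.eqn 0 h0
    have e3 := h.decomp 0 h0
    have e4 := h'.decomp 0 h0
    have := h.Kr_zero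
    have := h.Kl_zero
    have := h'.Kr_zero
    have := h'.Kl_zero
    simp only [mem_preimage, mem_Iic]
    linarith
  obtain ⟨t0, ⟨ht0, hd0⟩, hub⟩ := hcomp.exists_isGreatest hne
  simp only [mem_preimage, mem_Iic] at hd0
  have ht0t : t0 < t := by
    rcases ht0.2.lt_or_eq with h1 | h1
    · exact h1
    · subst h1; linarith
  have hpos : ∀ u ∈ Ioc t0 t, x u < x' u := by
    intro u hu
    by_contra! hc
    have : u ≤ t0 := hub ⟨⟨ht0.1.trans hu.1.le, hu.2⟩, by simpa using hc⟩
    exact absurd hu.1 (not_lt.mpr this)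
  have hmono : ∀ u ∈ Ioc t0 t, x' t - x t ≤ x' u - x u := by
    intro u hu
    have hu0 : 0 ≤ u := ht0.1.trans hu.1.le
    have huT : u ∈ Icc (0 : ℝ) T := ⟨hu0, hu.2.trans ht.2⟩
    have f1 : Kl t = Kl u := h.flat_l u t hu0 hu.2 ht.2 fun v hv => by
      have hvT : v ∈ Icc (0 : ℝ) T := ⟨hu0.trans hv.1, hv.2.trans ht.2⟩
      exact (hl v hvT (hpos v ⟨hu.1.trans_le hv.1, hv.2⟩)).trans_le (h'.lower v hvT)
    have f2 : Kr' t = Kr' u := h'.flat_r u t hu0 hu.2 ht.2 fun v hv => by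
      have hvT : v ∈ Icc (0 : ℝ) T := ⟨hu0.trans hv.1, hv.2.trans ht.2⟩
      exact (h.upper v hvT).trans_lt (hr v hvT (hpos v ⟨hu.1.trans_le hv.1, hv.2⟩))
    have m1 := h.mono_Kr huT ht hu.2
    have m2 := h'.mono_Kl huT ht hu.2
    have := h.eqn t ht
    have := h'.eqn t ht
    have := h.decomp t ht
    have := h'.decomp t ht
    have := h.eqn u huT
    have := h'.eqn u huT
    have := h.decomp u huT
    have := h'.decomp u huT
    linarith
  have htend : Filter.Tendsto (fun u => x' u - x u) (nhdsWithin t0 (Ioc t0 t))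
      (nhds (x' t0 - x t0)) :=
    (hd t0 ht0).mono fun u hu => ⟨ht0.1.trans hu.1.le, hu.2⟩
  haveI : (nhdsWithin t0 (Ioc t0 t)).NeBot := by
    rw [nhdsWithin_Ioc_eq_nhdsGT ht0t]; infer_instance
  have := ge_of_tendsto htend (Filter.eventually_of_mem self_mem_nhdsWithin hmono)
  linarith

/-- Time reversal identifies the backward Skorokhod problem `BSP_l^r(s, a)` with the
forward Skorokhod problem `SP_{l̄}^{r̄}(s̄)` for the reversed data
`s̄_t = a + s_T − s_{T−t}`, `l̄(t,·) = l(T−t,·)`, `r̄(t,·) = r(T−t,·)`: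
the reversed processes `x̄_t = x_{T−t}`, `K̄_t = K_T − K_{T−t}` solve `SP_{l̄}^{r̄}(s̄)`,
and this forward problem has no other solution. -/
theorem stmt_7 (T c C a : ℝ) (hT : 0 ≤ T) (hc : 0 < c) (hcC : c < C)
    (l r : ℝ → ℝ → ℝ) (s : ℝ → ℝ) (hs : ContinuousOn s (Icc 0 T))
    (hlr : LRAssumptions T c C l r)
    (hla : l T a ≤ 0) (hra : 0 ≤ r T a)
    (x K Kr Kl : ℝ → ℝ)
    (hsol : BackwardSkorokhodSolution T l r s a x K Kr Kl) :
    SkorokhodSolution T (fun t y => l (T - t) y) (fun t y => r (T - t) y)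
      (fun t => a + s T - s (T - t)) (fun t => x (T - t))
      (fun t => K T - K (T - t)) (fun t => Kr T - Kr (T - t))
      (fun t => Kl T - Kl (T - t)) ∧
    ∀ x' K' Kr' Kl' : ℝ → ℝ,
      SkorokhodSolution T (fun t y => l (T - t) y) (fun t y => r (T - t) y)
        (fun t => a + s T - s (T - t)) x' K' Kr' Kl' →
      ∀ t ∈ Icc (0 : ℝ) T, x' t = x (T - t) ∧ K' t = K T - K (T - t) := by
  have hrev : ∀ t ∈ Icc (0 : ℝ) T, T - t ∈ Icc (0 : ℝ) T := fun t ht =>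
    ⟨by linarith [ht.2], by linarith [ht.1]⟩
  have hTT : T ∈ Icc (0 : ℝ) T := ⟨hT, le_rfl⟩
  have hcrev : ContinuousOn (fun t : ℝ => T - t) (Icc 0 T) := by fun_prop
  have hfwd : SkorokhodSolution T (fun t y => l (T - t) y) (fun t y => r (T - t) y)
      (fun t => a + s T - s (T - t)) (fun t => x (T - t))
      (fun t => K T - K (T - t)) (fun t => Kr T - Kr (T - t))
      (fun t => Kl T - Kl (T - t)) :=
    { cont_x := hsol.cont_x.comp hcrev hrev
      eqn := fun t ht => hsol.eqn _ (hrev t ht)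
      lower := fun t ht => hsol.lower _ (hrev t ht)
      upper := fun t ht => hsol.upper _ (hrev t ht)
      decomp := fun t ht => by
        have := hsol.decomp _ (hrev t ht)
        have := hsol.decomp _ hTT
        linarith
      Kr_zero := by simp
      Kl_zero := by simp
      cont_Kr := continuousOn_const.sub (hsol.cont_Kr.comp hcrev hrev)
      cont_Kl := continuousOn_const.sub (hsol.cont_Kl.comp hcrev hrev)
      mono_Kr := fun u hu v hv huv => by
        have := hsol.mono_Kr (hrev v hv) (hrev u hu) (by linarith)
        simp only
        linarith
      mono_Kl := fun u hu v hv huv => by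
        have := hsol.mono_Kl (hrev v hv) (hrev u hu) (by linarith)
        simp only
        linarith
      flat_l := fun p q hp hpq hq H => by
        have := hsol.flat_l (T - q) (T - p) (by linarith) (by linarith) (by linarith)
          fun u hu => by
            have := H (T - u) ⟨by linarith [hu.2], by linarith [hu.1]⟩
            simpa using this
        linarith
      flat_r := fun p q hp hpq hq H => by
        have := hsol.flat_r (T - q) (T - p) (by linarith) (by linarith) (by linarith)
          fun u hu => by
            have := H (T - u) ⟨by linarith [hu.2], by linarith [hu.1]⟩
            simpa using this
        linarith }
  refine ⟨hfwd, fun x' K' Kr' Kl' h' t ht => ?_⟩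
  obtain ⟨-, -, hl, hr, -⟩ := hlr
  have hl' : ∀ t ∈ Icc (0 : ℝ) T, StrictMono ((fun t y => l (T - t) y) t) :=
    fun t ht => hl _ (hrev t ht)
  have hr' : ∀ t ∈ Icc (0 : ℝ) T, StrictMono ((fun t y => r (T - t) y) t) :=
    fun t ht => hr _ (hrev t ht)
  have hx : x' t = x (T - t) :=
    le_antisymm (skorokhod_le hl' hr' hfwd h' t ht) (skorokhod_le hl' hr' h' hfwd t ht)
  refine ⟨hx, ?_⟩
  have e1 := hfwd.eqn t ht
  have e2 := h'.eqn t ht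
  linarith
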